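/- In the quandle ring Z[Core(Z)], for any nonzero element u with minimal support index m and maximal support index M with m < M, the square u² has minimal support index 2m - M and maximal support index 2M - m; in particular u² ≠ u. -/

import Mathlib

/-- Product on the quandle ring ℤ[Core(ℤ)]: e_a · e_b = e_{2b-a}. -/
noncomputable def coreMul (u v : ℤ →₀ ℤ) : ℤ →₀ ℤ :=
  u.sum fun a α => v.sum fun b β => Finsupp.single (2 * b - a) (α * β)

/-- The coefficient of `e_k` in a product is the sum of the products of coefficients over all
pairs `(a, b)` with `2 * b - a = k`. -/
theorem coreMul_apply (u v : ℤ →₀ ℤ) (k : ℤ) :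
    coreMul u v k =
      ∑ a ∈ u.support, ∑ b ∈ v.support, if 2 * b - a = k then u a * v b else 0 := by
  simp only [coreMul, Finsupp.sum, Finsupp.finsetSum_apply, Finsupp.single_apply]

/-- If `k` is represented as `2 * b - a` by exactly one pair of support indices, the coefficient
of `e_k` in the product is the product of the corresponding coefficients. -/
theorem coreMul_apply_of_unique {u v : ℤ →₀ ℤ} {k a₀ b₀ : ℤ} (hk : 2 * b₀ - a₀ = k)
    (ha₀ : a₀ ∈ u.support) (hb₀ : b₀ ∈ v.support)
    (huniq : ∀ a ∈ u.support, ∀ b ∈ v.support, 2 * b - a = k → a = a₀ ∧ b = b₀) :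
    coreMul u v k = u a₀ * v b₀ := by
  rw [coreMul_apply, Finset.sum_eq_single_of_mem a₀ ha₀, Finset.sum_eq_single_of_mem b₀ hb₀,
    if_pos hk]
  · intro b hb hne
    exact if_neg fun h => hne (huniq a₀ ha₀ b hb h).2
  · intro a ha hne
    exact Finset.sum_eq_zero fun b hb => if_neg fun h => hne (huniq a ha b hb h).1

/-- Every support index of a product has the form `2 * b - a` for support indices `a`, `b`. -/
theorem exists_of_mem_support_coreMul {u v : ℤ →₀ ℤ} {k : ℤ} (hk : k ∈ (coreMul u v).support) :
    ∃ a ∈ u.support, ∃ b ∈ v.support, 2 * b - a = k := by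
  rw [Finsupp.mem_support_iff, coreMul_apply] at hk
  obtain ⟨a, ha, h⟩ := Finset.exists_ne_zero_of_sum_ne_zero hk
  obtain ⟨b, hb, h⟩ := Finset.exists_ne_zero_of_sum_ne_zero h
  exact ⟨a, ha, b, hb, by_contra fun hne => h (if_neg hne)⟩

theorem min_support_coreMul_self {u : ℤ →₀ ℤ} {m M : ℤ} (hm : u.support.min = m)
    (hM : u.support.max = M) : (coreMul u u).support.min = ((2 * m - M : ℤ) : WithTop ℤ) := by
  have hmem := Finset.mem_of_min hm
  have hMem := Finset.mem_of_max hM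
  have hle : ∀ a ∈ u.support, m ≤ a := fun a ha => Finset.min_le_of_eq ha hm
  have hge : ∀ a ∈ u.support, a ≤ M := fun a ha => Finset.le_max_of_eq ha hM
  refine le_antisymm (Finset.min_le ?_) (Finset.le_min fun k hk => ?_)
  · rw [Finsupp.mem_support_iff, coreMul_apply_of_unique rfl hMem hmem]
    · exact mul_ne_zero (Finsupp.mem_support_iff.1 hMem) (Finsupp.mem_support_iff.1 hmem)
    · intro a ha b hb h
      have := hge a ha
      have := hle b hb
      omega
  · obtain ⟨a, ha, b, hb, rfl⟩ := exists_of_mem_support_coreMul hk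
    have := hge a ha
    have := hle b hb
    exact WithTop.coe_le_coe.2 (by omega)

theorem max_support_coreMul_self {u : ℤ →₀ ℤ} {m M : ℤ} (hm : u.support.min = m)
    (hM : u.support.max = M) : (coreMul u u).support.max = ((2 * M - m : ℤ) : WithBot ℤ) := by
  have hmem := Finset.mem_of_min hm
  have hMem := Finset.mem_of_max hM
  have hle : ∀ a ∈ u.support, m ≤ a := fun a ha => Finset.min_le_of_eq ha hm
  have hge : ∀ a ∈ u.support, a ≤ M := fun a ha => Finset.le_max_of_eq ha hM
  refine le_antisymm (Finset.max_le fun k hk => ?_) (Finset.le_max ?_)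
  · obtain ⟨a, ha, b, hb, rfl⟩ := exists_of_mem_support_coreMul hk
    have := hle a ha
    have := hge b hb
    exact WithBot.coe_le_coe.2 (by omega)
  · rw [Finsupp.mem_support_iff, coreMul_apply_of_unique rfl hmem hMem]
    · exact mul_ne_zero (Finsupp.mem_support_iff.1 hmem) (Finsupp.mem_support_iff.1 hMem)
    · intro a ha b hb h
      have := hle a ha
      have := hge b hb
      omega

/-- For a nonzero u ∈ ℤ[Core(ℤ)] with minimal support index m and maximal
support index M, m < M, the square u² has minimal support index 2m - M and
maximal support index 2M - m; in particular u² ≠ u. -/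
theorem stmt1 (u : ℤ →₀ ℤ) (hu : u ≠ 0) (m M : ℤ)
    (hm : (u.support.min : WithBot ℤ) = (m : ℤ))
    (hM : (u.support.max : WithTop ℤ) = (M : ℤ))
    (hlt : m < M) :
    ((coreMul u u).support.min : WithBot ℤ) = ((2 * m - M : ℤ) : WithBot ℤ) ∧
    ((coreMul u u).support.max : WithTop ℤ) = ((2 * M - m : ℤ) : WithTop ℤ) ∧
    coreMul u u ≠ u := by
  have hmin : u.support.min = (m : WithTop ℤ) := hm
  have hmax : u.support.max = (M : WithBot ℤ) := hM
  refine ⟨min_support_coreMul_self hmin hmax, max_support_coreMul_self hmin hmax, fun h => ?_⟩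
  have hmax' := max_support_coreMul_self hmin hmax
  rw [h, hmax, WithBot.coe_inj] at hmax'
  omega
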